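/- Let W = (G, m) be a finite weighted graph with a centre vertex v₀ and cycle edges A(v₀) ⊆ E_{v₀} (i.e., G − A(v₀) is a tree). Set δ = ρ(v₀) − ∑_{e ∈ A(v₀)} m_e / m((v₀)_e) − m(A(v₀))/m(v₀), where ρ(v₀) = m(E_{v₀})/m(v₀). Then the Lebesgue measure of the magnetic spectral gaps set MS^W = [0, 2ρ_∞] \ ⋃_α σ(Δ_α^W) is at least δ. In particular, if δ > 0, then MS^W ≠ ∅. -/

import Mathlib

open Matrix BigOperators

/-- Sum of edge weights over edges incident to `v` (loops counted twice). -/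
noncomputable def edgeSumAt {V E : Type*} [Fintype E] [DecidableEq V] (src tgt : E → V)
    (mE : E → ℝ) (v : V) : ℝ :=
  ∑ e : E, ((if src e = v then mE e else 0) + (if tgt e = v then mE e else 0))

/-- Relative weight `ρ(v) = m(E_v)/m(v)`. -/
noncomputable def rho {V E : Type*} [Fintype E] [DecidableEq V] (src tgt : E → V)
    (m : V → ℝ) (mE : E → ℝ) (v : V) : ℝ :=
  edgeSumAt src tgt mE v / m v

/-- Matrix of the discrete magnetic Laplacian (in the orthonormal basis
`m(v)^{-1/2} 1_v` of `ℓ²(V,m)`), with unimodular phases `z e` on the edges. -/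
noncomputable def dmlPhase {V E : Type*} [Fintype E] [DecidableEq V] (src tgt : E → V)
    (m : V → ℝ) (mE : E → ℝ) (z : E → ℂ) : Matrix V V ℂ :=
  fun u v =>
    (if u = v then ((rho src tgt m mE u : ℝ) : ℂ) else 0) -
      ((1 / (Real.sqrt (m u) * Real.sqrt (m v)) : ℝ) : ℂ) *
        ∑ e : E, (mE e : ℂ) *
          ((if src e = v ∧ tgt e = u then z e else 0) +
           (if tgt e = v ∧ src e = u then starRingEnd ℂ (z e) else 0))

/-- Discrete magnetic Laplacian with vector potential `α : E → ℝ`. -/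
noncomputable def dml {V E : Type*} [Fintype E] [DecidableEq V] (src tgt : E → V)
    (m : V → ℝ) (mE : E → ℝ) (α : E → ℝ) : Matrix V V ℂ :=
  dmlPhase src tgt m mE (fun e => Complex.exp ((α e : ℂ) * Complex.I))

/-- Real spectrum of a complex matrix. -/
noncomputable def realSpec {V : Type*} [Fintype V] [DecidableEq V] (M : Matrix V V ℂ) : Set ℝ :=
  {x : ℝ | (x : ℂ) ∈ spectrum ℂ M}

/-- Degree of a vertex in the multigraph (loops counted twice). -/
def mdeg {V E : Type*} [Fintype E] [DecidableEq V] (src tgt : E → V) (v : V) : ℕ :=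
  ∑ e : E, ((if src e = v then 1 else 0) + (if tgt e = v then 1 else 0))

/-- Simple graph underlying the multigraph restricted to the edge set `S`. -/
def multiGraph {V E : Type*} (src tgt : E → V) (S : Set E) : SimpleGraph V :=
  SimpleGraph.fromRel (fun u v => ∃ e ∈ S, src e = u ∧ tgt e = v)

/-- `G − A` is a tree: connected with `|E \ A| = |V| − 1`. -/
def isTreeAfter {V E : Type*} [Fintype V] [Fintype E] [DecidableEq E] (src tgt : E → V)
    (A : Finset E) : Prop :=
  (multiGraph src tgt {e | e ∉ A}).Connected ∧
    (Finset.univ.filter (fun e => e ∉ A)).card = Fintype.card V - 1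

/-- Magnetic spectral gaps set `[0, 2ρ_∞] \ ⋃_α σ(Δ_α)`. -/
noncomputable def msSet {V E : Type*} [Fintype V] [Fintype E] [DecidableEq V] [Nonempty V]
    (src tgt : E → V) (m : V → ℝ) (mE : E → ℝ) : Set ℝ :=
  Set.Icc 0 (2 * Finset.univ.sup' Finset.univ_nonempty (rho src tgt m mE)) \
    ⋃ (α : E → ℝ), realSpec (dml src tgt m mE α)

/-!
Whatever the potential `α`, the spectrum of `Δ_α` is confined between two operators which do not
depend on `α`, because phases can be gauged away on a forest. Deleting the edges of `A` lowers the
quadratic form, so the `i`-th eigenvalue of `Δ_α` is at least the `i`-th eigenvalue `a_i` of the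
Laplacian of the forest `G − A`. Restricting to functions that vanish at `v₀` makes the phases on
the edges of `A` invisible, so the `(i+1)`-st eigenvalue of `Δ_α` is at most the `i`-th eigenvalue
`b_i` of the Dirichlet Laplacian at `v₀`. With eigenvalues in decreasing order, each interval
`(b_i, a_i)` is therefore free of spectrum for all `α` at once. The difference of the two traces is
exactly `δ`, and the smallest forest eigenvalue is zero, so the gaps have total length at least `δ`.
-/

section Variational

variable {𝕜 F F' : Type*} [RCLike 𝕜]
  [NormedAddCommGroup F] [InnerProductSpace 𝕜 F] [FiniteDimensional 𝕜 F]
  [NormedAddCommGroup F'] [InnerProductSpace 𝕜 F'] [FiniteDimensional 𝕜 F']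
  {T : F →ₗ[𝕜] F} {S : F' →ₗ[𝕜] F'} {n p : ℕ}

theorem exists_ne_zero_forall_dual_apply_eq_zero {K M ι : Type*} [Field K] [AddCommGroup M]
    [Module K M] [FiniteDimensional K M] [Fintype ι] (w : ι → Module.Dual K M)
    (h : Fintype.card ι < Module.finrank K M) : ∃ x ≠ 0, ∀ i, w i x = 0 := by
  have hker : LinearMap.ker (LinearMap.pi w) ≠ ⊥ :=
    LinearMap.ker_ne_bot_of_finrank_lt (by rwa [Module.finrank_fintype_fun_eq_card])
  obtain ⟨x, hx, hx0⟩ := (Submodule.ne_bot_iff _).1 hker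
  exact ⟨x, hx0, congrFun hx⟩

theorem re_inner_apply_self_eq_sum_eigenvalues (hT : T.IsSymmetric)
    (hn : Module.finrank 𝕜 F = n) (x : F) :
    RCLike.re (inner 𝕜 x (T x)) =
      ∑ j, hT.eigenvalues hn j * ‖inner 𝕜 (hT.eigenvectorBasis hn j) x‖ ^ 2 := by
  rw [← (hT.eigenvectorBasis hn).sum_inner_mul_inner x (T x), map_sum]
  refine Finset.sum_congr rfl fun j _ => ?_
  rw [← hT, hT.apply_eigenvectorBasis, inner_smul_left, RCLike.conj_ofReal, mul_left_comm,
    ← inner_conj_symm x, RCLike.conj_mul, ← RCLike.ofReal_pow, ← RCLike.ofReal_mul,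
    RCLike.ofReal_re]

theorem eigenvalues_mul_norm_sq_le_re_inner (hT : T.IsSymmetric) (hn : Module.finrank 𝕜 F = n)
    (i : Fin n) (x : F) (hx : ∀ j, i < j → inner 𝕜 (hT.eigenvectorBasis hn j) x = 0) :
    hT.eigenvalues hn i * ‖x‖ ^ 2 ≤ RCLike.re (inner 𝕜 x (T x)) := by
  rw [re_inner_apply_self_eq_sum_eigenvalues hT hn,
    ← (hT.eigenvectorBasis hn).sum_sq_norm_inner_right x, Finset.mul_sum]
  refine Finset.sum_le_sum fun j _ => ?_
  rcases lt_or_ge i j with hij | hji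
  · simp [hx j hij]
  · gcongr
    exact hT.eigenvalues_antitone hn hji

theorem re_inner_le_eigenvalues_mul_norm_sq (hT : T.IsSymmetric) (hn : Module.finrank 𝕜 F = n)
    (i : Fin n) (x : F) (hx : ∀ j < i, inner 𝕜 (hT.eigenvectorBasis hn j) x = 0) :
    RCLike.re (inner 𝕜 x (T x)) ≤ hT.eigenvalues hn i * ‖x‖ ^ 2 := by
  rw [re_inner_apply_self_eq_sum_eigenvalues hT hn,
    ← (hT.eigenvectorBasis hn).sum_sq_norm_inner_right x, Finset.mul_sum]
  refine Finset.sum_le_sum fun j _ => ?_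
  rcases lt_or_ge j i with hji | hij
  · simp [hx j hji]
  · gcongr
    exact hT.eigenvalues_antitone hn hij

theorem eigenvalues_le_of_re_inner_le (hT : T.IsSymmetric) (hn : Module.finrank 𝕜 F = n) {c : ℝ}
    (h : ∀ x, RCLike.re (inner 𝕜 x (T x)) ≤ c * ‖x‖ ^ 2) (i : Fin n) :
    hT.eigenvalues hn i ≤ c := by
  have hle := (eigenvalues_mul_norm_sq_le_re_inner hT hn i (hT.eigenvectorBasis hn i)
    fun j hij => (hT.eigenvectorBasis hn).inner_eq_zero hij.ne').trans (h _)
  simpa using hle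

-- Dimension count: the first `k` eigenvectors of `S` and the eigenvectors of `T` after the `i`-th
-- impose fewer than `p` linear conditions on `F'`.
theorem eigenvalues_le_eigenvalues_of_re_inner_le (hT : T.IsSymmetric) (hS : S.IsSymmetric)
    (hn : Module.finrank 𝕜 F = n) (hp : Module.finrank 𝕜 F' = p) (J : F' →ₗᵢ[𝕜] F)
    (hJ : ∀ x, RCLike.re (inner 𝕜 (J x) (T (J x))) ≤ RCLike.re (inner 𝕜 x (S x)))
    (i : Fin n) (k : Fin p) (hik : n + k ≤ p + i) :
    hT.eigenvalues hn i ≤ hS.eigenvalues hp k := by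
  obtain ⟨x, hx0, hx⟩ := exists_ne_zero_forall_dual_apply_eq_zero
    (Sum.elim (fun j : Finset.Iio k => innerₛₗ 𝕜 (hS.eigenvectorBasis hp j))
      fun j : Finset.Ioi i => innerₛₗ 𝕜 (hT.eigenvectorBasis hn j) ∘ₗ J.toLinearMap)
    (by rw [Fintype.card_sum, Fintype.card_coe, Fintype.card_coe, Fin.card_Iio, Fin.card_Ioi, hp]
        omega)
  have hxS : ∀ j < k, inner 𝕜 (hS.eigenvectorBasis hp j) x = 0 := fun j hj =>
    hx (.inl ⟨j, Finset.mem_Iio.2 hj⟩)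
  have hxT : ∀ j, i < j → inner 𝕜 (hT.eigenvectorBasis hn j) (J x) = 0 := fun j hj =>
    hx (.inr ⟨j, Finset.mem_Ioi.2 hj⟩)
  refine le_of_mul_le_mul_right ?_ (by positivity : 0 < ‖x‖ ^ 2)
  calc hT.eigenvalues hn i * ‖x‖ ^ 2 = hT.eigenvalues hn i * ‖J x‖ ^ 2 := by rw [J.norm_map]
    _ ≤ RCLike.re (inner 𝕜 (J x) (T (J x))) :=
      eigenvalues_mul_norm_sq_le_re_inner hT hn i _ hxT
    _ ≤ RCLike.re (inner 𝕜 x (S x)) := hJ x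
    _ ≤ hS.eigenvalues hp k * ‖x‖ ^ 2 := re_inner_le_eigenvalues_mul_norm_sq hS hp k x hxS

end Variational

section HermitianMatrix

variable {ι κ : Type*} [Fintype ι] [Fintype κ]

theorem sum_eigenvalues_toEuclideanLin {𝕜 : Type*} [RCLike 𝕜] [DecidableEq ι] {M : Matrix ι ι 𝕜}
    {n : ℕ} (hM : (toEuclideanLin M).IsSymmetric)
    (hn : Module.finrank 𝕜 (EuclideanSpace 𝕜 ι) = n) :
    ∑ i, hM.eigenvalues hn i = RCLike.re M.trace := by
  rw [← hM.re_trace_eq_sum_eigenvalues hn, toEuclideanLin_eq_toLin_orthonormal, trace_toLin_eq]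

theorem exists_eigenvalues_eq_of_mem_realSpec [DecidableEq ι] {M : Matrix ι ι ℂ} {n : ℕ}
    (hM : (toEuclideanLin M).IsSymmetric) (hn : Module.finrank ℂ (EuclideanSpace ℂ ι) = n)
    {x : ℝ} (hx : x ∈ realSpec M) : ∃ i, hM.eigenvalues hn i = x := by
  have hx' : (x : ℂ) ∈ spectrum ℂ (toEuclideanLin M) := by rwa [spectrum_toLpLin]
  obtain ⟨i, hi⟩ :=
    hM.exists_eigenvalues_eq hn (Module.End.hasEigenvalue_iff_mem_spectrum.2 hx')
  exact ⟨i, Complex.ofReal_injective hi⟩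

theorem finrank_euclideanSpace_ne {𝕜 : Type*} [RCLike 𝕜] {N : ℕ}
    (hι : Fintype.card ι = N + 1) (i₀ : ι) :
    Module.finrank 𝕜 (EuclideanSpace 𝕜 {i // i ≠ i₀}) = N := by
  classical
  simp [hι]

/-- Extension by zero along an injective map of index types, as an isometry of Euclidean spaces. -/
noncomputable def extendIsometry {𝕜 : Type*} [RCLike 𝕜] (f : ι ↪ κ) :
    EuclideanSpace 𝕜 ι →ₗᵢ[𝕜] EuclideanSpace 𝕜 κ where
  toLinearMap := (WithLp.linearEquiv 2 𝕜 (κ → 𝕜)).symm.toLinearMap ∘ₗ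
    Function.ExtendByZero.linearMap 𝕜 f ∘ₗ (WithLp.linearEquiv 2 𝕜 (ι → 𝕜)).toLinearMap
  norm_map' x := by
    rw [EuclideanSpace.norm_eq, EuclideanSpace.norm_eq]
    congr 1
    refine (Fintype.sum_of_injective f f.injective _ _ (fun k hk => ?_) fun i => ?_).symm
    · simp [Function.extend_apply' _ _ _ hk]
    · simp [f.injective.extend_apply]

variable {𝕜 : Type*} [RCLike 𝕜] (f : ι ↪ κ) (x : EuclideanSpace 𝕜 ι)

theorem extendIsometry_apply (i : ι) : extendIsometry f x (f i) = x i :=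
  f.injective.extend_apply _ _ i

theorem extendIsometry_apply_of_notMem_range {k : κ} (hk : k ∉ Set.range f) :
    extendIsometry f x k = 0 :=
  Function.extend_apply' _ _ _ hk

theorem inner_toEuclideanLin_submatrix [DecidableEq ι] [DecidableEq κ] (M : Matrix κ κ 𝕜) :
    inner 𝕜 x (toEuclideanLin (M.submatrix f f) x) =
      inner 𝕜 (extendIsometry f x) (toEuclideanLin M (extendIsometry f x)) := by
  have hrow : ∀ i, ∑ j, M (f i) (f j) * x j = ∑ l, M (f i) l * extendIsometry f x l := fun i =>
    Fintype.sum_of_injective f f.injective _ _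
      (fun l hl => by rw [extendIsometry_apply_of_notMem_range f x hl, mul_zero])
      fun j => by rw [extendIsometry_apply]
  simp only [PiLp.inner_apply, RCLike.inner_apply, toLpLin_apply, mulVec, dotProduct,
    submatrix_apply]
  refine Fintype.sum_of_injective f f.injective _ _ (fun l hl => ?_) fun i => ?_
  · rw [extendIsometry_apply_of_notMem_range f x hl, map_zero, mul_zero]
  · rw [hrow, extendIsometry_apply]

end HermitianMatrix

section Intervals

variable {N : ℕ}

theorem notMem_Ioo_succ_castSucc_of_antitone {f : Fin (N + 1) → ℝ} (hf : Antitone f) (i : Fin N)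
    (j : Fin (N + 1)) : f j ∉ Set.Ioo (f i.succ) (f i.castSucc) := by
  rintro ⟨hlt, hgt⟩
  rcases le_or_gt j i.castSucc with hj | hj
  · exact (hf hj).not_gt hgt
  · exact (hf (Fin.castSucc_lt_iff_succ_le.1 hj)).not_gt hlt

theorem ofReal_sum_sub_le_volume_iUnion_Ioo {a : Fin (N + 1) → ℝ} {b : Fin N → ℝ}
    (ha : Antitone a) (hab : ∀ i, a i.succ ≤ b i) :
    ENNReal.ofReal (∑ i, (a i.castSucc - b i)) ≤
      MeasureTheory.volume (⋃ i, Set.Ioo (b i) (a i.castSucc)) := by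
  have hdisj : Pairwise (Function.onFun Disjoint fun i => Set.Ioo (b i) (a i.castSucc)) := by
    refine (pairwise_disjoint_on _).2 fun i j hij => Set.disjoint_left.2 ?_
    rintro x ⟨hbx, -⟩ ⟨-, hxa⟩
    exact (hbx.trans hxa).not_ge ((ha (Fin.succ_le_castSucc_iff.2 hij)).trans (hab i))
  rw [MeasureTheory.measure_iUnion hdisj fun i => measurableSet_Ioo, tsum_fintype]
  simp only [Real.volume_Ioo]
  exact Finset.le_sum_of_subadditive _ ENNReal.ofReal_zero.le (fun _ _ => ENNReal.ofReal_add_le) _ _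

end Intervals

section Forest

variable {V E : Type*} {src tgt : E → V} {A : Finset E}

/-- `G − A` is a forest, in cohomological form: off `A` every vector potential is the gradient of
a function on the vertices. -/
def IsForestAfter (src tgt : E → V) (A : Finset E) : Prop :=
  ∀ α : E → ℝ, ∃ φ : V → ℝ, ∀ e ∉ A, α e = φ (tgt e) - φ (src e)

theorem IsForestAfter.src_ne_tgt (hA : IsForestAfter src tgt A) {e : E} (he : e ∉ A) :
    src e ≠ tgt e := by
  intro hloop
  obtain ⟨φ, hφ⟩ := hA 1
  simpa [hloop] using hφ e he

/-- The gradient `φ ↦ (φ(tgt e) − φ(src e))_e` on the edges outside `A`. -/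
def gradientOff (src tgt : E → V) (A : Finset E) : (V → ℝ) →ₗ[ℝ] ({e // e ∉ A} → ℝ) :=
  LinearMap.funLeft ℝ ℝ (tgt ∘ Subtype.val) - LinearMap.funLeft ℝ ℝ (src ∘ Subtype.val)

theorem eq_of_gradientOff_eq_zero (hconn : (multiGraph src tgt {e | e ∉ A}).Connected)
    {f : V → ℝ} (hf : gradientOff src tgt A f = 0) (u v : V) : f u = f v := by
  have hedge : ∀ e ∉ A, f (tgt e) = f (src e) := fun e he =>
    sub_eq_zero.1 (congrFun hf ⟨e, he⟩)
  obtain ⟨w⟩ := hconn.preconnected u v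
  induction w with
  | nil => rfl
  | cons hadj _ ih =>
    obtain ⟨-, ⟨e, he, rfl, rfl⟩ | ⟨e, he, rfl, rfl⟩⟩ := (SimpleGraph.fromRel_adj _ _ _).1 hadj
    · exact (hedge e he).symm.trans ih
    · exact (hedge e he).trans ih

theorem finrank_ker_gradientOff_le_one (hconn : (multiGraph src tgt {e | e ∉ A}).Connected) :
    Module.finrank ℝ (LinearMap.ker (gradientOff src tgt A)) ≤ 1 := by
  obtain ⟨v⟩ := hconn.nonempty
  have hone : gradientOff src tgt A 1 = 0 := sub_self (1 : {e // e ∉ A} → ℝ)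
  refine finrank_le_one ⟨1, hone⟩ fun f => ⟨f.1 v, ?_⟩
  ext u
  simpa using eq_of_gradientOff_eq_zero hconn f.2 v u

theorem isForestAfter_of_isTreeAfter [Fintype V] [Fintype E] [DecidableEq E]
    (htree : isTreeAfter src tgt A) : IsForestAfter src tgt A := by
  obtain ⟨hconn, hcard⟩ := htree
  have hcardE : Module.finrank ℝ ({e // e ∉ A} → ℝ) = Fintype.card V - 1 := by
    rw [Module.finrank_fintype_fun_eq_card, Fintype.card_subtype, hcard]
  have hrank := (gradientOff src tgt A).finrank_range_add_finrank_ker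
  rw [Module.finrank_fintype_fun_eq_card] at hrank
  have hrange : LinearMap.range (gradientOff src tgt A) = ⊤ :=
    Submodule.eq_top_of_finrank_eq <| (Submodule.finrank_le _).antisymm <| by
      have := finrank_ker_gradientOff_le_one hconn
      omega
  intro α
  obtain ⟨φ, hφ⟩ := LinearMap.range_eq_top.1 hrange fun e => α e
  exact ⟨φ, fun e he => (congrFun hφ ⟨e, he⟩).symm⟩

/-- The edge weights of `G − A`; the edges of `A` are kept, with weight zero. -/
noncomputable def weightsOff (mE : E → ℝ) (A : Finset E) : E → ℝ :=
  (A : Set E)ᶜ.indicator mE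

theorem weightsOff_of_mem {mE : E → ℝ} {e : E} (he : e ∈ A) : weightsOff mE A e = 0 :=
  Set.indicator_of_notMem (not_not.2 he) _

theorem weightsOff_of_notMem {mE : E → ℝ} {e : E} (he : e ∉ A) : weightsOff mE A e = mE e :=
  Set.indicator_of_mem he _

end Forest

section Incidence

variable {V E : Type*} [Fintype V] [DecidableEq V] (src tgt : E → V) (m : V → ℝ)

/-- The magnetic derivative in the orthonormal basis `m(v)^{-1/2} 1_v` of `ℓ²(V,m)`. It is the
paper's `d_α` with `src = ∂₊`, `tgt = ∂₋` up to the factor `e^{iα_e/2}`, which affects neither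
`d_α* d_α` nor `|d_α f|`; the edge weights are left out. -/
noncomputable def magneticIncidence (α : E → ℝ) : Matrix E V ℂ := fun e v =>
  ((if src e = v then Complex.exp (α e * Complex.I) else 0) - (if tgt e = v then 1 else 0)) /
    (√(m v) : ℝ)

theorem magneticIncidence_mulVec_apply (α : E → ℝ) (x : V → ℂ) (e : E) :
    (magneticIncidence src tgt m α *ᵥ x) e =
      Complex.exp (α e * Complex.I) * (x (src e) / (√(m (src e)) : ℝ)) -
        x (tgt e) / (√(m (tgt e)) : ℝ) := by
  simp only [magneticIncidence, mulVec, dotProduct, sub_div, sub_mul, ite_div, ite_mul, zero_div,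
    zero_mul, Finset.sum_sub_distrib, Finset.sum_ite_eq, Finset.mem_univ, if_true]
  ring

/-- The gauge transformation `x ↦ e^{iφ} x`. -/
noncomputable def gaugeIsometry (φ : V → ℝ) : EuclideanSpace ℂ V →ₗᵢ[ℂ] EuclideanSpace ℂ V where
  toLinearMap := toEuclideanLin (diagonal fun v => Complex.exp (φ v * Complex.I))
  norm_map' x := by
    simp [EuclideanSpace.norm_eq, toLpLin_apply, mulVec_diagonal, Complex.norm_exp_ofReal_mul_I]

theorem gaugeIsometry_apply (φ : V → ℝ) (x : EuclideanSpace ℂ V) (v : V) :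
    gaugeIsometry φ x v = Complex.exp (φ v * Complex.I) * x v :=
  mulVec_diagonal _ _ v

theorem norm_magneticIncidence_mulVec_gaugeIsometry {α β : E → ℝ} {φ : V → ℝ} {e : E}
    (h : α e + φ (src e) = φ (tgt e) + β e) (x : EuclideanSpace ℂ V) :
    ‖(magneticIncidence src tgt m α *ᵥ gaugeIsometry φ x) e‖ =
      ‖(magneticIncidence src tgt m β *ᵥ x) e‖ := by
  have hphase : Complex.exp (α e * Complex.I) * Complex.exp (φ (src e) * Complex.I) =
      Complex.exp (φ (tgt e) * Complex.I) * Complex.exp (β e * Complex.I) := by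
    rw [← Complex.exp_add, ← Complex.exp_add, ← add_mul, ← add_mul]
    exact_mod_cast congrArg (fun t : ℝ => Complex.exp (t * Complex.I)) h
  have hfactor : (magneticIncidence src tgt m α *ᵥ gaugeIsometry φ x) e =
      Complex.exp (φ (tgt e) * Complex.I) * (magneticIncidence src tgt m β *ᵥ x) e := by
    simp only [magneticIncidence_mulVec_apply, gaugeIsometry_apply]
    linear_combination (x (src e) / (√(m (src e)) : ℝ)) * hphase
  rw [hfactor, norm_mul, Complex.norm_exp_ofReal_mul_I, one_mul]

theorem norm_magneticIncidence_mulVec_of_endpoint_eq_zero {x y : V → ℂ}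
    (hxy : ∀ v, ‖x v‖ = ‖y v‖) {e : E} (h : y (src e) = 0 ∨ y (tgt e) = 0) (α β : E → ℝ) :
    ‖(magneticIncidence src tgt m α *ᵥ x) e‖ = ‖(magneticIncidence src tgt m β *ᵥ y) e‖ := by
  rw [magneticIncidence_mulVec_apply, magneticIncidence_mulVec_apply]
  have hzero : ∀ v, y v = 0 → x v = 0 := fun v hv => by rw [← norm_eq_zero, hxy, hv, norm_zero]
  rcases h with h | h <;>
    simp [h, hzero _ h, hxy, Complex.norm_exp_ofReal_mul_I]

theorem norm_sq_magneticIncidence_mulVec_le {m : V → ℝ} (hm : ∀ v, 0 < m v) (α : E → ℝ)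
    (x : V → ℂ) (e : E) :
    ‖(magneticIncidence src tgt m α *ᵥ x) e‖ ^ 2 ≤
      2 * (‖x (src e)‖ ^ 2 / m (src e) + ‖x (tgt e)‖ ^ 2 / m (tgt e)) := by
  have hscale : ∀ v, ‖x v / (√(m v) : ℝ)‖ ^ 2 = ‖x v‖ ^ 2 / m v := fun v => by
    rw [norm_div, div_pow, Complex.norm_real, Real.norm_eq_abs, sq_abs, Real.sq_sqrt (hm v).le]
  rw [magneticIncidence_mulVec_apply, ← hscale, ← hscale]
  refine (pow_le_pow_left₀ (norm_nonneg _) (norm_sub_le _ _) 2).trans ?_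
  rw [norm_mul, Complex.norm_exp_ofReal_mul_I, one_mul]
  exact add_sq_le

end Incidence

section Laplacian

variable {V E : Type*} [Fintype E] [DecidableEq V] {src tgt : E → V} {m : V → ℝ} {mE : E → ℝ}

theorem dml_eq_conjTranspose_mul_diagonal_mul [DecidableEq E] (hm : ∀ v, 0 < m v) (α : E → ℝ) :
    dml src tgt m mE α = (magneticIncidence src tgt m α)ᴴ * diagonal (fun e => (mE e : ℂ)) *
      magneticIncidence src tgt m α := by
  ext u v
  have hrho : (if u = v then (rho src tgt m mE u : ℂ) else 0) =
      ∑ e, (mE e : ℂ) * ((if src e = u ∧ src e = v then 1 else 0) +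
        (if tgt e = u ∧ tgt e = v then 1 else 0)) / ((√(m u) : ℝ) * (√(m v) : ℝ)) := by
    split_ifs with huv
    · subst huv
      rw [← Complex.ofReal_mul, Real.mul_self_sqrt (hm u).le, ← Finset.sum_div]
      simp [rho, edgeSumAt, mul_add, apply_ite Complex.ofReal]
    · refine (Finset.sum_eq_zero fun e _ => ?_).symm
      rw [if_neg fun h => huv (h.1.symm.trans h.2), if_neg fun h => huv (h.1.symm.trans h.2)]
      simp
  rw [Matrix.mul_apply]
  simp only [dml, dmlPhase, hrho, mul_diagonal, conjTranspose_apply, Finset.mul_sum,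
    ← Finset.sum_sub_distrib, magneticIncidence]
  refine Finset.sum_congr rfl fun e _ => ?_
  have hphase : starRingEnd ℂ (Complex.exp (α e * Complex.I)) * Complex.exp (α e * Complex.I) =
      1 := by
    rw [Complex.conj_mul', Complex.norm_exp_ofReal_mul_I, Complex.ofReal_one, one_pow]
  generalize Complex.exp (α e * Complex.I) = z at *
  simp only [ite_and, ← starRingEnd_apply, map_div₀, map_sub, apply_ite (starRingEnd ℂ), map_one,
    map_zero, Complex.conj_ofReal, Complex.ofReal_div, Complex.ofReal_mul, Complex.ofReal_one]
  split_ifs <;>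
    first
    | linear_combination (-(mE e : ℂ) / ((√(m u) : ℝ) * (√(m v) : ℝ))) * hphase
    | ring

theorem isSymmetric_toEuclideanLin_dml [Fintype V] (src tgt : E → V) (hm : ∀ v, 0 < m v)
    (mE α : E → ℝ) : (toEuclideanLin (dml src tgt m mE α)).IsSymmetric := by
  classical
  rw [isSymmetric_toEuclideanLin_iff, dml_eq_conjTranspose_mul_diagonal_mul hm]
  exact isHermitian_conjTranspose_mul_mul _
    (isHermitian_diagonal_iff.2 fun e => Complex.conj_ofReal (mE e))

theorem re_inner_dml [Fintype V] (hm : ∀ v, 0 < m v) (mE α : E → ℝ) (x : EuclideanSpace ℂ V) :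
    RCLike.re (inner ℂ x (toEuclideanLin (dml src tgt m mE α) x)) =
      ∑ e, mE e * ‖(magneticIncidence src tgt m α *ᵥ x) e‖ ^ 2 := by
  classical
  set D := magneticIncidence src tgt m α
  have hinner : inner ℂ x (toEuclideanLin (dml src tgt m mE α) x) =
      star (D *ᵥ x) ⬝ᵥ diagonal (fun e => (mE e : ℂ)) *ᵥ D *ᵥ x := by
    rw [dml_eq_conjTranspose_mul_diagonal_mul hm, toLpLin_apply,
      EuclideanSpace.inner_eq_star_dotProduct, dotProduct_comm, ← mulVec_mulVec, ← mulVec_mulVec,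
      dotProduct_mulVec, star_mulVec]
  rw [hinner]
  simp only [dotProduct, mulVec_diagonal, map_sum, Pi.star_apply]
  refine Finset.sum_congr rfl fun e _ => ?_
  rw [mul_left_comm, ← starRingEnd_apply, Complex.conj_mul', ← Complex.ofReal_pow,
    ← Complex.ofReal_mul]
  exact Complex.ofReal_re _

theorem sum_rho_mul [Fintype V] (f : V → ℝ) :
    ∑ v, rho src tgt m mE v * f v =
      ∑ e, mE e * (f (src e) / m (src e) + f (tgt e) / m (tgt e)) := by
  simp only [rho, edgeSumAt, Finset.sum_div, Finset.sum_mul]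
  rw [Finset.sum_comm]
  refine Finset.sum_congr rfl fun e _ => ?_
  simp only [add_div, add_mul, ite_div, ite_mul, zero_div, zero_mul, Finset.sum_add_distrib,
    Finset.sum_ite_eq, Finset.mem_univ, if_true]
  ring

theorem re_inner_dml_le [Fintype V] [Nonempty V] (hm : ∀ v, 0 < m v) (hmE : ∀ e, 0 ≤ mE e)
    (α : E → ℝ) (x : EuclideanSpace ℂ V) :
    RCLike.re (inner ℂ x (toEuclideanLin (dml src tgt m mE α) x)) ≤
      2 * Finset.univ.sup' Finset.univ_nonempty (rho src tgt m mE) * ‖x‖ ^ 2 := by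
  calc RCLike.re (inner ℂ x (toEuclideanLin (dml src tgt m mE α) x))
      = ∑ e, mE e * ‖(magneticIncidence src tgt m α *ᵥ x) e‖ ^ 2 := re_inner_dml hm mE α x
    _ ≤ ∑ e, mE e * (2 * (‖x (src e)‖ ^ 2 / m (src e) + ‖x (tgt e)‖ ^ 2 / m (tgt e))) := by
      gcongr with e
      · exact hmE e
      · exact norm_sq_magneticIncidence_mulVec_le src tgt hm α x e
    _ = 2 * ∑ v, rho src tgt m mE v * ‖x v‖ ^ 2 := by
      simp only [sum_rho_mul fun v => ‖x v‖ ^ 2, Finset.mul_sum, mul_left_comm]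
    _ ≤ 2 * ∑ v, Finset.univ.sup' Finset.univ_nonempty (rho src tgt m mE) * ‖x v‖ ^ 2 := by
      gcongr with v
      exact Finset.le_sup' _ (Finset.mem_univ v)
    _ = 2 * Finset.univ.sup' Finset.univ_nonempty (rho src tgt m mE) * ‖x‖ ^ 2 := by
      rw [← Finset.mul_sum, EuclideanSpace.norm_sq_eq, mul_assoc]

theorem dml_apply_self {v : V} (hloop : ∀ e, src e = v → tgt e = v → mE e = 0) (α : E → ℝ) :
    dml src tgt m mE α v v = rho src tgt m mE v := by
  have hzero : ∀ e, (mE e : ℂ) *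
      ((if src e = v ∧ tgt e = v then Complex.exp (α e * Complex.I) else 0) +
        (if tgt e = v ∧ src e = v then starRingEnd ℂ (Complex.exp (α e * Complex.I)) else 0)) =
      0 := fun e => by
    by_cases h : src e = v ∧ tgt e = v
    · rw [hloop e h.1 h.2, Complex.ofReal_zero, zero_mul]
    · rw [if_neg h, if_neg (mt And.symm h), add_zero, mul_zero]
  simp only [dml, dmlPhase, if_true, hzero, Finset.sum_const_zero, mul_zero, sub_zero]
/-- The eigenvalues of `Δ_α` in decreasing order, with multiplicity. -/
noncomputable def dmlEigenvalues [Fintype V] (src tgt : E → V) (hm : ∀ v, 0 < m v)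
    (mE α : E → ℝ) {n : ℕ} (hV : Fintype.card V = n) : Fin n → ℝ :=
  (isSymmetric_toEuclideanLin_dml src tgt hm mE α).eigenvalues (finrank_euclideanSpace.trans hV)

theorem dmlEigenvalues_zero_last_nonpos [Fintype V] (hm : ∀ v, 0 < m v) {N : ℕ}
    (hV : Fintype.card V = N + 1) : dmlEigenvalues src tgt hm mE 0 hV (Fin.last N) ≤ 0 := by
  have : Nonempty V := Fintype.card_pos_iff.1 (hV ▸ N.succ_pos)
  let x : EuclideanSpace ℂ V := WithLp.toLp 2 fun v => ((√(m v) : ℝ) : ℂ)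
  have hsqrt : ∀ v, ((√(m v) : ℝ) : ℂ) ≠ 0 := fun v =>
    Complex.ofReal_ne_zero.2 (Real.sqrt_ne_zero'.2 (hm v))
  have hx : x ≠ 0 := fun h => hsqrt (Classical.arbitrary V) (congrFun (congrArg WithLp.ofLp h) _)
  have hharmonic : ∀ e, (magneticIncidence src tgt m 0 *ᵥ x) e = 0 := fun e => by
    simp [magneticIncidence_mulVec_apply, x, hsqrt]
  have hle := eigenvalues_mul_norm_sq_le_re_inner
    (isSymmetric_toEuclideanLin_dml src tgt hm mE 0) (finrank_euclideanSpace.trans hV)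
    (Fin.last N) x fun j hj => absurd hj (Fin.le_last j).not_gt
  simp only [re_inner_dml hm, hharmonic, norm_zero, zero_pow two_ne_zero, mul_zero,
    Finset.sum_const_zero] at hle
  exact nonpos_of_mul_nonpos_left hle (by positivity)

end Laplacian

section CentreVertex

variable {V E : Type*} [Fintype V] [Fintype E] [DecidableEq V] {src tgt : E → V} {m : V → ℝ}
  {mE : E → ℝ} {v₀ : V} {A : Finset E} {N : ℕ}

/-- The Laplacian without magnetic field and with a Dirichlet condition at `v₀`: the principal
submatrix of `Δ_0` obtained by deleting `v₀`. -/
noncomputable def dirichletLaplacian (src tgt : E → V) (m : V → ℝ) (mE : E → ℝ) (v₀ : V) :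
    Matrix {v // v ≠ v₀} {v // v ≠ v₀} ℂ :=
  (dml src tgt m mE 0).submatrix (Function.Embedding.subtype _) (Function.Embedding.subtype _)

theorem isSymmetric_toEuclideanLin_dirichletLaplacian (src tgt : E → V) (hm : ∀ v, 0 < m v)
    (mE : E → ℝ) (v₀ : V) :
    (toEuclideanLin (dirichletLaplacian src tgt m mE v₀)).IsSymmetric :=
  isSymmetric_toEuclideanLin_iff.2 <|
    (isSymmetric_toEuclideanLin_iff.1 (isSymmetric_toEuclideanLin_dml src tgt hm mE 0)).submatrix _

/-- The eigenvalues of the Dirichlet Laplacian in decreasing order, with multiplicity. -/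
noncomputable def dirichletEigenvalues (src tgt : E → V) (hm : ∀ v, 0 < m v) (mE : E → ℝ)
    (v₀ : V) (hV : Fintype.card V = N + 1) : Fin N → ℝ :=
  (isSymmetric_toEuclideanLin_dirichletLaplacian src tgt hm mE v₀).eigenvalues
    (finrank_euclideanSpace_ne hV v₀)

theorem re_inner_dirichletLaplacian (hm : ∀ v, 0 < m v) (mE : E → ℝ)
    (x : EuclideanSpace ℂ {v // v ≠ v₀}) :
    RCLike.re (inner ℂ x (toEuclideanLin (dirichletLaplacian src tgt m mE v₀) x)) =
      ∑ e, mE e * ‖(magneticIncidence src tgt m 0 *ᵥ extendIsometry (.subtype _) x) e‖ ^ 2 := by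
  rw [← re_inner_dml hm]
  exact congrArg _ (inner_toEuclideanLin_submatrix (.subtype _) x _)

theorem dirichletEigenvalues_nonneg (hm : ∀ v, 0 < m v) (hmE : ∀ e, 0 ≤ mE e)
    (hV : Fintype.card V = N + 1) (i : Fin N) :
    0 ≤ dirichletEigenvalues src tgt hm mE v₀ hV i := by
  refine LinearMap.IsPositive.nonneg_eigenvalues
    ⟨isSymmetric_toEuclideanLin_dirichletLaplacian src tgt hm mE v₀, fun x => ?_⟩ _ i
  rw [inner_re_symm, re_inner_dirichletLaplacian hm]
  exact Finset.sum_nonneg fun e _ => mul_nonneg (hmE e) (sq_nonneg _)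

theorem dmlEigenvalues_weightsOff_le (hforest : IsForestAfter src tgt A) (hm : ∀ v, 0 < m v)
    (hmE : ∀ e, 0 ≤ mE e) (hV : Fintype.card V = N) (α : E → ℝ) (i : Fin N) :
    dmlEigenvalues src tgt hm (weightsOff mE A) 0 hV i ≤ dmlEigenvalues src tgt hm mE α hV i := by
  obtain ⟨φ, hφ⟩ := hforest α
  refine eigenvalues_le_eigenvalues_of_re_inner_le _ _ _ _ (gaugeIsometry fun v => -φ v)
    (fun x => ?_) i i le_rfl
  rw [re_inner_dml hm, re_inner_dml hm]
  refine Finset.sum_le_sum fun e _ => ?_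
  by_cases he : e ∈ A
  · rw [weightsOff_of_mem he, zero_mul]
    exact mul_nonneg (hmE e) (sq_nonneg _)
  · have hgauge : (0 : E → ℝ) e + -φ (src e) = -φ (tgt e) + α e := by
      rw [hφ e he, Pi.zero_apply]
      ring
    rw [weightsOff_of_notMem he, norm_magneticIncidence_mulVec_gaugeIsometry src tgt m hgauge]

theorem dmlEigenvalues_succ_le_dirichletEigenvalues (hforest : IsForestAfter src tgt A)
    (hA : ∀ e ∈ A, src e = v₀ ∨ tgt e = v₀) (hm : ∀ v, 0 < m v) (mE : E → ℝ)
    (hV : Fintype.card V = N + 1) (α : E → ℝ) (i : Fin N) :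
    dmlEigenvalues src tgt hm mE α hV i.succ ≤ dirichletEigenvalues src tgt hm mE v₀ hV i := by
  obtain ⟨φ, hφ⟩ := hforest α
  refine eigenvalues_le_eigenvalues_of_re_inner_le _ _ _ _
    ((gaugeIsometry φ).comp (extendIsometry (.subtype _))) (fun x => ?_) i.succ i
    (by rw [Fin.val_succ]; omega)
  rw [re_inner_dml hm, re_inner_dirichletLaplacian hm]
  refine (Finset.sum_congr rfl fun e _ => ?_).le
  congr 2
  by_cases he : e ∈ A
  · have hv₀ : extendIsometry (.subtype _) x v₀ = 0 :=
      extendIsometry_apply_of_notMem_range _ x (by simp)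
    refine norm_magneticIncidence_mulVec_of_endpoint_eq_zero src tgt m (fun v => ?_)
      ((hA e he).imp (fun h => h ▸ hv₀) fun h => h ▸ hv₀) α 0
    simp [gaugeIsometry_apply, Complex.norm_exp_ofReal_mul_I]
  · exact norm_magneticIncidence_mulVec_gaugeIsometry src tgt m (by simp [hφ e he]) _

theorem Ioo_subset_msSet [Nonempty V] (hforest : IsForestAfter src tgt A)
    (hA : ∀ e ∈ A, src e = v₀ ∨ tgt e = v₀) (hm : ∀ v, 0 < m v) (hmE : ∀ e, 0 ≤ mE e)
    (hV : Fintype.card V = N + 1) (i : Fin N) :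
    Set.Ioo (dirichletEigenvalues src tgt hm mE v₀ hV i)
      (dmlEigenvalues src tgt hm (weightsOff mE A) 0 hV i.castSucc) ⊆ msSet src tgt m mE := by
  rintro x ⟨hlt, hgt⟩
  refine ⟨⟨(dirichletEigenvalues_nonneg hm hmE hV i).trans hlt.le, ?_⟩, ?_⟩
  · exact (hgt.le.trans (dmlEigenvalues_weightsOff_le hforest hm hmE hV 0 _)).trans
      (eigenvalues_le_of_re_inner_le _ _ (re_inner_dml_le hm hmE 0) _)
  · refine Set.mem_iUnion.not.2 fun ⟨α, hx⟩ => ?_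
    obtain ⟨j, rfl⟩ := exists_eigenvalues_eq_of_mem_realSpec
      (isSymmetric_toEuclideanLin_dml src tgt hm mE α) (finrank_euclideanSpace.trans hV) hx
    exact notMem_Ioo_succ_castSucc_of_antitone (LinearMap.IsSymmetric.eigenvalues_antitone _ _) i j
      ⟨(dmlEigenvalues_succ_le_dirichletEigenvalues hforest hA hm mE hV α i).trans_lt hlt,
        hgt.trans_le (dmlEigenvalues_weightsOff_le hforest hm hmE hV α _)⟩

theorem sum_dmlEigenvalues (hloop : ∀ e, src e = tgt e → mE e = 0) (hm : ∀ v, 0 < m v)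
    (α : E → ℝ) (hV : Fintype.card V = N) :
    ∑ i, dmlEigenvalues src tgt hm mE α hV i = ∑ v, rho src tgt m mE v := by
  rw [dmlEigenvalues, sum_eigenvalues_toEuclideanLin, trace, map_sum]
  refine Finset.sum_congr rfl fun v _ => ?_
  rw [diag_apply, dml_apply_self fun e hs ht => hloop e (hs.trans ht.symm)]
  exact Complex.ofReal_re _

theorem sum_dirichletEigenvalues (hloop : ∀ e, src e = tgt e → src e ≠ v₀ → mE e = 0)
    (hm : ∀ v, 0 < m v) (hV : Fintype.card V = N + 1) :
    ∑ i, dirichletEigenvalues src tgt hm mE v₀ hV i =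
      ∑ v, rho src tgt m mE v - rho src tgt m mE v₀ := by
  have hdiag : ∀ v : {v // v ≠ v₀},
      RCLike.re (dirichletLaplacian src tgt m mE v₀ v v) = rho src tgt m mE v := fun v => by
    refine (congrArg _ (dml_apply_self (fun e hs ht => ?_) 0)).trans (Complex.ofReal_re _)
    exact hloop e (hs.trans ht.symm) (hs ▸ v.2)
  rw [dirichletEigenvalues, sum_eigenvalues_toEuclideanLin, trace, map_sum,
    Fintype.sum_eq_add_sum_subtype_ne _ v₀, add_sub_cancel_left]
  exact Finset.sum_congr rfl fun v _ => hdiag v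

theorem sum_rho_sub_sum_rho_weightsOff :
    ∑ v, rho src tgt m mE v - ∑ v, rho src tgt m (weightsOff mE A) v =
      ∑ e ∈ A, mE e * (1 / m (src e) + 1 / m (tgt e)) := by
  classical
  have hsum := fun w : E → ℝ => sum_rho_mul (src := src) (tgt := tgt) (m := m) (mE := w) 1
  simp only [Pi.one_apply, mul_one] at hsum
  rw [hsum, hsum, ← Finset.sum_sub_distrib]
  refine (Finset.sum_subset A.subset_univ fun e _ he => ?_).symm.trans ?_
  · rw [weightsOff_of_notMem he, sub_self]
  · exact Finset.sum_congr rfl fun e he => by rw [weightsOff_of_mem he, zero_mul, sub_zero]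

theorem le_sum_dmlEigenvalues_sub_dirichletEigenvalues (hforest : IsForestAfter src tgt A)
    (hA : ∀ e ∈ A, src e = v₀ ∨ tgt e = v₀) (hm : ∀ v, 0 < m v) (mE : E → ℝ)
    (hV : Fintype.card V = N + 1) :
    rho src tgt m mE v₀ - ∑ e ∈ A, mE e / m (if src e = v₀ then tgt e else src e) -
        (∑ e ∈ A, mE e) / m v₀ ≤
      ∑ i : Fin N, (dmlEigenvalues src tgt hm (weightsOff mE A) 0 hV i.castSucc -
        dirichletEigenvalues src tgt hm mE v₀ hV i) := by
  have hforestTrace := sum_dmlEigenvalues (mE := weightsOff mE A) (fun e hst =>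
    weightsOff_of_mem (of_not_not fun he => hforest.src_ne_tgt he hst)) hm 0 hV
  have hdirichletTrace := sum_dirichletEigenvalues (v₀ := v₀) (mE := mE) (fun e hst hs =>
    absurd hst (hforest.src_ne_tgt fun he => (hA e he).elim hs (hst ▸ hs))) hm hV
  have hends : ∀ e ∈ A, mE e * (1 / m (src e) + 1 / m (tgt e)) =
      mE e / m (if src e = v₀ then tgt e else src e) + mE e / m v₀ := fun e he => by
    split_ifs with hs
    · rw [hs]
      ring
    · rw [(hA e he).resolve_left hs]
      ring
  have hedges : ∑ v, rho src tgt m mE v - ∑ v, rho src tgt m (weightsOff mE A) v =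
      ∑ e ∈ A, mE e / m (if src e = v₀ then tgt e else src e) + (∑ e ∈ A, mE e) / m v₀ := by
    rw [sum_rho_sub_sum_rho_weightsOff, Finset.sum_div, ← Finset.sum_add_distrib]
    exact Finset.sum_congr rfl hends
  have hlast := dmlEigenvalues_zero_last_nonpos (src := src) (tgt := tgt) (mE := weightsOff mE A)
    hm hV
  rw [Fin.sum_univ_castSucc] at hforestTrace
  rw [Finset.sum_sub_distrib]
  linarith

end CentreVertex

theorem stmt7_general {V E : Type*} [Fintype V] [Fintype E] [DecidableEq V] [Nonempty V]
    (src tgt : E → V) (m : V → ℝ) (mE : E → ℝ) (hm : ∀ v, 0 < m v) (hmE : ∀ e, 0 ≤ mE e)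
    (v₀ : V) (A : Finset E) (hA : ∀ e ∈ A, src e = v₀ ∨ tgt e = v₀)
    (hforest : IsForestAfter src tgt A) :
    ENNReal.ofReal
        (rho src tgt m mE v₀ -
          (∑ e ∈ A, mE e / m (if src e = v₀ then tgt e else src e)) -
          (∑ e ∈ A, mE e) / m v₀) ≤
      MeasureTheory.volume (msSet src tgt m mE) := by
  obtain ⟨N, hV⟩ := Nat.exists_eq_succ_of_ne_zero (Fintype.card_ne_zero (α := V))
  let a := dmlEigenvalues src tgt hm (weightsOff mE A) 0 hV
  let b := dirichletEigenvalues src tgt hm mE v₀ hV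
  have ha : Antitone a := LinearMap.IsSymmetric.eigenvalues_antitone _ _
  have hab : ∀ i, a i.succ ≤ b i := fun i =>
    (dmlEigenvalues_weightsOff_le hforest hm hmE hV 0 _).trans
      (dmlEigenvalues_succ_le_dirichletEigenvalues hforest hA hm mE hV 0 i)
  calc ENNReal.ofReal _ ≤ ENNReal.ofReal (∑ i, (a i.castSucc - b i)) :=
        ENNReal.ofReal_le_ofReal
          (le_sum_dmlEigenvalues_sub_dirichletEigenvalues hforest hA hm mE hV)
    _ ≤ MeasureTheory.volume (⋃ i, Set.Ioo (b i) (a i.castSucc)) :=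
        ofReal_sum_sub_le_volume_iUnion_Ioo ha hab
    _ ≤ MeasureTheory.volume (msSet src tgt m mE) :=
        MeasureTheory.measure_mono (Set.iUnion_subset (Ioo_subset_msSet hforest hA hm hmE hV))

/-- Let `v₀` be a centre vertex of the finite weighted graph `(G,m)`
with cycle edges `A ⊆ E_{v₀}` (so that `G − A` is a tree), and set
`δ = ρ(v₀) − ∑_{e∈A} m_e/m((v₀)_e) − m(A)/m(v₀)`. Then the Lebesgue measure of the
magnetic spectral gaps set is at least `δ`; in particular, if `δ > 0` the magnetic
spectral gaps set is nonempty. -/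
theorem stmt7 {V E : Type*} [Fintype V] [Fintype E] [DecidableEq V] [DecidableEq E]
    [Nonempty V] (src tgt : E → V) (m : V → ℝ) (mE : E → ℝ)
    (hm : ∀ v, 0 < m v) (hmE : ∀ e, 0 < mE e)
    (v₀ : V) (A : Finset E)
    (hA : ∀ e ∈ A, src e = v₀ ∨ tgt e = v₀)
    (htree : isTreeAfter src tgt A) :
    ENNReal.ofReal
        (rho src tgt m mE v₀ -
          (∑ e ∈ A, mE e / m (if src e = v₀ then tgt e else src e)) -
          (∑ e ∈ A, mE e) / m v₀) ≤
      MeasureTheory.volume (msSet src tgt m mE) :=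
  stmt7_general src tgt m mE hm (fun e => (hmE e).le) v₀ A hA (isForestAfter_of_isTreeAfter htree)
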